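/- Suppose f_n ≥ 0, ∑_{n≥1} f_n = 1, and ∑_{j>n} f_j = C n^{-β}(1+o(1)) for some C > 0 and β ∈ (0,1). Then as θ → 0⁺, 1 - ∑_{n≥1} f_n e^{i n θ} = C_β θ^β (1 + o(1)) for a constant C_β depending only on C and β (with C_β = C Γ(1-β) e^{-iπβ/2} up to normalization). -/

import Mathlib

open Filter Asymptotics

/-!
For a law `μ` on `[0, ∞)` with tail `T(y) = μ(y, ∞) ~ C y^{-β}`, put `D(s) = ∫ (1 - e^{-st}) dμ(t)`,
so that `1 - φ_μ(θ) = D(-iθ)`. When `Re r > 0`, Fubini gives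
`D(rθ) = r ∫_0^∞ T(x/θ) e^{-rx} dx`, and since `T(y) ≤ K y^{-β}` dominated convergence yields
`θ^{-β} D(rθ) → C r ∫_0^∞ x^{-β} e^{-rx} dx = C Γ(1-β) r^β`, the last equality extending from real
to complex `r` by the identity theorem.

At `r = -i` the last integral is only conditionally convergent, but no oscillatory estimate is
needed: `|D(s + δ) - D(s)| ≤ D(δ)` for `Re s ≥ 0` and `δ ≥ 0`, so shifting `r` by `ε > 0` changes
`θ^{-β} D(rθ)` by at most `θ^{-β} D(εθ) → C Γ(1-β) ε^β`, which is small with `ε`.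
-/

section

open MeasureTheory ProbabilityTheory Set Complex Topology

variable {μ : Measure ℝ} {T : ℝ → ℝ} {B C β θ t x : ℝ} {r s : ℂ}

lemma exists_forall_le_mul_rpow_neg (hβ : 0 ≤ β) (hB : ∀ y, T y ≤ B)
    (hT : Tendsto (fun y => T y * y ^ β) atTop (𝓝 C)) :
    ∃ K, ∀ y, 0 < y → T y ≤ K * y ^ (-β) := by
  obtain ⟨Y, hY⟩ := eventually_atTop.1 (hT.eventually (eventually_le_nhds (lt_add_one C)))
  refine ⟨max (C + 1) (|B| * |Y| ^ β), fun y hy => ?_⟩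
  rw [Real.rpow_neg hy.le, ← div_eq_mul_inv, le_div_iff₀ (by positivity)]
  rcases le_total Y y with hYy | hyY
  · exact (hY y hYy).trans (le_max_left _ _)
  · have hTB : T y ≤ |B| := (hB y).trans (le_abs_self B)
    have hyβ : y ^ β ≤ |Y| ^ β := Real.rpow_le_rpow hy.le (hyY.trans (le_abs_self Y)) hβ
    exact (mul_le_mul hTB hyβ (by positivity) (abs_nonneg B)).trans (le_max_right _ _)

lemma tendsto_comp_div_mul_rpow_neg (hT : Tendsto (fun y => T y * y ^ β) atTop (𝓝 C))
    (hx : 0 < x) :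
    Tendsto (fun θ => T (x / θ) * θ ^ (-β)) (𝓝[>] 0) (𝓝 (C * x ^ (-β))) := by
  have hdiv : Tendsto (fun θ : ℝ => x / θ) (𝓝[>] 0) atTop := by
    simpa only [div_eq_mul_inv] using tendsto_inv_nhdsGT_zero.const_mul_atTop hx
  refine ((hT.comp hdiv).mul_const (x ^ (-β))).congr' ?_
  filter_upwards [self_mem_nhdsWithin] with θ (hθ : 0 < θ)
  have hxβ : x ^ β ≠ 0 := by positivity
  simp only [Function.comp_apply, Real.div_rpow hx.le hθ.le, Real.rpow_neg hx.le,
    Real.rpow_neg hθ.le]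
  field_simp

lemma tendsto_mul_rpow_of_isEquivalent (hT : T ~[atTop] fun y => C * y ^ (-β)) :
    Tendsto (fun y => T y * y ^ β) atTop (𝓝 C) := by
  refine (hT.mul (IsEquivalent.refl (u := fun y => y ^ β))).tendsto_nhds_iff.2 ?_
  refine tendsto_const_nhds.congr' ?_
  filter_upwards [eventually_gt_atTop 0] with y hy
  rw [Pi.mul_apply, mul_assoc, ← Real.rpow_add hy, neg_add_cancel, Real.rpow_zero, mul_one]

lemma isEquivalent_comp_natFloor {u : ℕ → ℝ} (hu : u ~[atTop] fun n => C * (n : ℝ) ^ (-β)) :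
    (fun y : ℝ => u ⌊y⌋₊) ~[atTop] fun y => C * y ^ (-β) := by
  have hfloor : (fun y : ℝ => (⌊y⌋₊ : ℝ) ^ (-β)) ~[atTop] fun y => y ^ (-β) := by
    have hlim : Tendsto (fun y : ℝ => ((⌊y⌋₊ : ℝ) / y) ^ (-β)) atTop (𝓝 1) := by
      simpa only [Real.one_rpow] using
        (tendsto_nat_floor_div_atTop (R := ℝ)).rpow_const (p := -β) (Or.inl one_ne_zero)
    refine isEquivalent_of_tendsto_one (hlim.congr' ?_)
    filter_upwards [eventually_ge_atTop 0] with y hy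
    exact Real.div_rpow (Nat.cast_nonneg _) hy _
  exact (hu.comp_tendsto tendsto_nat_floor_atTop).trans (IsEquivalent.refl.mul hfloor)

lemma integrableOn_rpow_mul_exp_neg_mul {a b : ℝ} (ha : 0 < a) (hb : 0 < b) :
    IntegrableOn (fun x : ℝ => x ^ (a - 1) * Real.exp (-(b * x))) (Ioi 0) := by
  simpa [neg_mul] using
    integrableOn_rpow_mul_exp_neg_mul_rpow (s := a - 1) (by linarith) one_pos hb

lemma differentiableOn_integral_rpow_mul_cexp {a : ℝ} (ha : 0 < a) :
    DifferentiableOn ℂ (fun r : ℂ => ∫ x in Ioi (0 : ℝ), (x ^ (a - 1) : ℝ) * cexp (-(r * x)))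
      {r | 0 < r.re} := by
  -- the integral is the complex moment generating function of `x ↦ -x` under `x ^ (a - 1) dx`
  let ν : Measure ℝ :=
    (volume.restrict (Ioi 0)).withDensity fun x => ENNReal.ofReal (x ^ (a - 1))
  have hdens : AEMeasurable (fun x : ℝ => ENNReal.ofReal (x ^ (a - 1)))
      (volume.restrict (Ioi 0)) := by fun_prop
  have hset : Ioi 0 ⊆ interior (integrableExpSet Neg.neg ν) := by
    refine interior_maximal (fun b (hb : 0 < b) => ?_) isOpen_Ioi
    refine (integrable_withDensity_iff_integrable_smul₀' hdens
      (ae_of_all _ fun _ => ENNReal.ofReal_lt_top)).2 ?_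
    refine (integrableOn_rpow_mul_exp_neg_mul ha hb).congr_fun (fun x (hx : 0 < x) => ?_)
      measurableSet_Ioi
    simp [ENNReal.toReal_ofReal (Real.rpow_nonneg hx.le _)]
  refine (differentiableOn_complexMGF.mono fun r hr => hset hr).congr fun r _ => ?_
  rw [complexMGF, integral_withDensity_eq_integral_toReal_smul₀ hdens
    (ae_of_all _ fun _ => ENNReal.ofReal_lt_top)]
  refine setIntegral_congr_fun measurableSet_Ioi fun x (hx : 0 < x) => ?_
  simp [ENNReal.toReal_ofReal (Real.rpow_nonneg hx.le _)]

lemma integral_rpow_mul_cexp_neg_mul_Ioi {a : ℝ} (ha : 0 < a) (hr : 0 < r.re) :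
    ∫ x in Ioi (0 : ℝ), (x ^ (a - 1) : ℝ) * cexp (-(r * x)) = Gamma a * r ^ (-a : ℂ) := by
  have hopen : IsOpen {r : ℂ | 0 < r.re} := isOpen_lt continuous_const continuous_re
  have hrhs : DifferentiableOn ℂ (fun r : ℂ => Gamma a * r ^ (-a : ℂ)) {r | 0 < r.re} :=
    fun z hz => ((differentiableAt_id.cpow_const (Or.inl hz)).const_mul _).differentiableWithinAt
  have hreal : ∀ b : ℝ, 0 < b → ∫ x in Ioi (0 : ℝ), (x ^ (a - 1) : ℝ) * cexp (-(b * x)) =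
      Gamma a * (b : ℂ) ^ (-a : ℂ) := by
    intro b hb
    have h := integral_cpow_mul_exp_neg_mul_Ioi (a := a) (by simpa using ha) hb
    rw [one_div, inv_cpow _ _ (by simp [arg_ofReal_of_nonneg hb.le, Real.pi_ne_zero.symm]),
      ← cpow_neg, mul_comm] at h
    rw [← h]
    refine setIntegral_congr_fun measurableSet_Ioi fun x (hx : 0 < x) => ?_
    simp [ofReal_cpow hx.le]
  have hfreq : ∃ᶠ z in 𝓝[≠] (1 : ℂ),
      ∫ x in Ioi (0 : ℝ), (x ^ (a - 1) : ℝ) * cexp (-(z * x)) = Gamma a * z ^ (-a : ℂ) := by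
    have hmap : Tendsto ofReal (𝓝[>] (1 : ℝ)) (𝓝[≠] (1 : ℂ)) :=
      tendsto_nhdsWithin_iff.2 ⟨(continuous_ofReal.tendsto' 1 1 ofReal_one).mono_left inf_le_left,
        by filter_upwards [self_mem_nhdsWithin] with b (hb : 1 < b); simpa using hb.ne'⟩
    refine hmap.frequently (Eventually.frequently ?_)
    filter_upwards [self_mem_nhdsWithin] with b (hb : 1 < b)
    exact hreal b (one_pos.trans hb)
  exact (differentiableOn_integral_rpow_mul_cexp ha).analyticOnNhd hopen
    |>.eqOn_of_preconnected_of_frequently_eq (hrhs.analyticOnNhd hopen)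
      (convex_halfSpace_re_gt 0).isPreconnected (by simp) hfreq hr

/-- The Laplace transform deficit `∫ (1 - e^{-st}) dμ(t)` of a measure, for complex `s`: for `μ`
carried by `[0, ∞)` it interpolates between the Laplace transform (`s > 0`) and the characteristic
function (`s` imaginary). -/
noncomputable def laplaceDefect (μ : Measure ℝ) (s : ℂ) : ℂ :=
  ∫ t : ℝ, (1 - cexp (-(s * t))) ∂μ

lemma norm_cexp_neg_mul_le_one (hs : 0 ≤ s.re) (ht : 0 ≤ t) : ‖cexp (-(s * t))‖ ≤ 1 := by
  rw [norm_exp, neg_re, re_mul_ofReal]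
  exact Real.exp_le_one_iff.2 (neg_nonpos.2 (mul_nonneg hs ht))

lemma integrable_cexp_neg_mul [IsFiniteMeasure μ] (hμ : ∀ᵐ t ∂μ, 0 ≤ t) (hs : 0 ≤ s.re) :
    Integrable (fun t : ℝ => cexp (-(s * t))) μ :=
  .of_bound (by fun_prop) 1 (hμ.mono fun _ ht => norm_cexp_neg_mul_le_one hs ht)

lemma one_sub_charFun_eq_laplaceDefect [IsProbabilityMeasure μ] (θ : ℝ) :
    1 - charFun μ θ = laplaceDefect μ (-I * θ) := by
  have hint : Integrable (fun t : ℝ => cexp (-(-I * θ * t))) μ :=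
    .of_bound (by fun_prop) 1 (ae_of_all _ fun t => by simp [norm_exp])
  rw [laplaceDefect, integral_sub (integrable_const 1) hint, integral_const, probReal_univ,
    one_smul, charFun_apply_real]
  congr! 4
  ring

lemma one_sub_cexp_neg_mul_eq_integral (s : ℂ) (t : ℝ) :
    1 - cexp (-(s * t)) = ∫ x in (0 : ℝ)..t, s * cexp (-(s * x)) := by
  have hderiv (x : ℝ) : HasDerivAt (fun x : ℝ => -cexp (-(s * x))) (s * cexp (-(s * x))) x := by
    have := ((ofRealCLM.hasDerivAt (x := x)).const_mul s).neg.cexp.neg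
    exact this.congr_deriv (by simp [mul_comm])
  rw [intervalIntegral.integral_eq_sub_of_hasDerivAt (fun x _ => hderiv x)
    (Continuous.intervalIntegrable (by fun_prop) _ _)]
  simp [neg_add_eq_sub]

lemma one_sub_cexp_neg_mul_eq_setIntegral (s : ℂ) (ht : 0 ≤ t) :
    1 - cexp (-(s * t)) =
      ∫ x in Ioi (0 : ℝ), (Iio t).indicator (fun x : ℝ => s * cexp (-(s * x))) x := by
  rw [one_sub_cexp_neg_mul_eq_integral, setIntegral_indicator measurableSet_Iio, Ioi_inter_Iio,
    intervalIntegral.integral_of_le ht, integral_Ioc_eq_integral_Ioo]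

lemma laplaceDefect_eq_integral_Ioi [IsFiniteMeasure μ] (hμ : ∀ᵐ t ∂μ, 0 ≤ t)
    (hs : 0 < s.re) :
    laplaceDefect μ s = s * ∫ x in Ioi (0 : ℝ), μ.real (Ioi x) * cexp (-(s * x)) := by
  let g (x : ℝ) : ℂ := s * cexp (-(s * x))
  have hg : Integrable g (volume.restrict (Ioi 0)) := by
    simpa only [g, neg_mul] using
      (integrableOn_exp_mul_complex_Ioi (a := -s) (by simpa using hs) 0).const_mul s
  have hswap : Integrable (Function.uncurry fun t x => (Iio t).indicator g x)
      (μ.prod (volume.restrict (Ioi 0))) := by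
    have hset : MeasurableSet {p : ℝ × ℝ | p.2 < p.1} :=
      measurableSet_lt measurable_snd measurable_fst
    exact (hg.comp_snd μ).indicator hset
  calc laplaceDefect μ s
      = ∫ t, (∫ x in Ioi (0 : ℝ), (Iio t).indicator g x) ∂μ :=
        integral_congr_ae (hμ.mono fun t ht => one_sub_cexp_neg_mul_eq_setIntegral s ht)
    _ = ∫ x in Ioi (0 : ℝ), (∫ t, (Ioi x).indicator (fun _ => g x) t ∂μ) :=
        integral_integral_swap hswap
    _ = s * ∫ x in Ioi (0 : ℝ), μ.real (Ioi x) * cexp (-(s * x)) := by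
        rw [← integral_const_mul]
        congr! 2
        rw [integral_indicator_const _ measurableSet_Ioi, real_smul]
        ring

lemma laplaceDefect_mul_ofReal [IsFiniteMeasure μ] (hμ : ∀ᵐ t ∂μ, 0 ≤ t) (hr : 0 < r.re)
    (hθ : 0 < θ) :
    laplaceDefect μ (r * θ) =
      r * ∫ x in Ioi (0 : ℝ), μ.real (Ioi (x / θ)) * cexp (-(r * x)) := by
  have hscale := integral_comp_mul_left_Ioi'
    (fun x : ℝ => (μ.real (Ioi (x / θ)) : ℂ) * cexp (-(r * x))) 0 hθ
  rw [mul_zero] at hscale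
  rw [laplaceDefect_eq_integral_Ioi hμ (by simpa using mul_pos hr hθ), ← hscale, real_smul,
    ← mul_assoc]
  simp only [mul_div_cancel_left₀ _ hθ.ne', ofReal_mul, mul_assoc]

lemma norm_laplaceDefect_ofReal (hμ : ∀ᵐ t ∂μ, 0 ≤ t) {ε : ℝ} (hε : 0 ≤ ε) :
    ‖laplaceDefect μ ε‖ = ∫ t : ℝ, ‖1 - cexp (-(ε * t))‖ ∂μ := by
  have hreal (t : ℝ) : 1 - cexp (-(ε * t)) = ((1 - Real.exp (-(ε * t)) : ℝ) : ℂ) := by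
    push_cast; rfl
  have hnonneg : ∀ᵐ t ∂μ, 0 ≤ 1 - Real.exp (-(ε * t)) := hμ.mono fun t ht =>
    sub_nonneg.2 (Real.exp_le_one_iff.2 (neg_nonpos.2 (mul_nonneg hε ht)))
  simp only [laplaceDefect, hreal, integral_complex_ofReal, norm_real]
  rw [Real.norm_of_nonneg (integral_nonneg_of_ae hnonneg)]
  exact integral_congr_ae (hnonneg.mono fun t ht => (Real.norm_of_nonneg ht).symm)

lemma norm_laplaceDefect_sub_le [IsFiniteMeasure μ] (hμ : ∀ᵐ t ∂μ, 0 ≤ t) (hs : 0 ≤ s.re)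
    {ε : ℝ} (hε : 0 ≤ ε) :
    ‖laplaceDefect μ (s + ε) - laplaceDefect μ s‖ ≤ ‖laplaceDefect μ ε‖ := by
  have hint {z : ℂ} (hz : 0 ≤ z.re) : Integrable (fun t : ℝ => 1 - cexp (-(z * t))) μ :=
    (integrable_const 1).sub (integrable_cexp_neg_mul hμ hz)
  rw [norm_laplaceDefect_ofReal hμ hε, laplaceDefect, laplaceDefect,
    ← integral_sub (hint (by simpa using add_nonneg hs hε)) (hint hs)]
  refine norm_integral_le_of_norm_le (hint (by simpa using hε)).norm (hμ.mono fun t ht => ?_)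
  calc ‖1 - cexp (-((s + ε) * t)) - (1 - cexp (-(s * t)))‖
      = ‖cexp (-(s * t))‖ * ‖1 - cexp (-(ε * t))‖ := by
        rw [← norm_mul, mul_sub, ← Complex.exp_add]
        ring_nf
    _ ≤ ‖1 - cexp (-(ε * t))‖ :=
        mul_le_of_le_one_left (norm_nonneg _) (norm_cexp_neg_mul_le_one hs ht)

lemma tendsto_integral_comp_div_mul_cexp (hβ : β ∈ Ico (0 : ℝ) 1) (hT0 : ∀ y, 0 ≤ T y)
    (hTB : ∀ y, T y ≤ B) (hTm : Measurable T) (hT : Tendsto (fun y => T y * y ^ β) atTop (𝓝 C))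
    (hr : 0 < r.re) :
    Tendsto (fun θ : ℝ => ∫ x in Ioi (0 : ℝ), (T (x / θ) * θ ^ (-β) : ℝ) * cexp (-(r * x)))
      (𝓝[>] 0) (𝓝 (∫ x in Ioi (0 : ℝ), (C * x ^ (-β) : ℝ) * cexp (-(r * x)))) := by
  obtain ⟨K, hK⟩ := exists_forall_le_mul_rpow_neg hβ.1 hTB hT
  refine tendsto_integral_filter_of_dominated_convergence
    (fun x => K * (x ^ (-β) * Real.exp (-(r.re * x)))) ?_ ?_ ?_ ?_
  · exact .of_forall fun θ => Measurable.aestronglyMeasurable (by fun_prop)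
  · filter_upwards [self_mem_nhdsWithin] with θ (hθ : 0 < θ)
    refine (ae_restrict_mem measurableSet_Ioi).mono fun x (hx : 0 < x) => ?_
    have hbound : T (x / θ) * θ ^ (-β) ≤ K * x ^ (-β) := by
      have := mul_le_mul_of_nonneg_right (hK (x / θ) (div_pos hx hθ))
        (Real.rpow_nonneg hθ.le (-β))
      rwa [Real.div_rpow hx.le hθ.le, mul_assoc, div_mul_cancel₀ _ (by positivity)] at this
    have hnonneg : 0 ≤ T (x / θ) * θ ^ (-β) := mul_nonneg (hT0 _) (by positivity)
    rw [norm_mul, norm_real, Real.norm_of_nonneg hnonneg, norm_exp, neg_re, re_mul_ofReal,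
      ← mul_assoc]
    gcongr
  · simpa using (integrableOn_rpow_mul_exp_neg_mul (sub_pos.2 hβ.2) hr).const_mul K
  · refine (ae_restrict_mem measurableSet_Ioi).mono fun x (hx : 0 < x) => ?_
    exact ((continuous_ofReal.tendsto _).comp (tendsto_comp_div_mul_rpow_neg hT hx)).mul_const _

lemma mul_integral_rpow_neg_mul_cexp_Ioi (C : ℝ) (hβ : β < 1) (hr : 0 < r.re) :
    r * ∫ x in Ioi (0 : ℝ), (C * x ^ (-β) : ℝ) * cexp (-(r * x)) =
      C * Gamma (1 - β) * r ^ (β : ℂ) := by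
  have hr0 : r ≠ 0 := fun h => by simp [h] at hr
  have hΓ := integral_rpow_mul_cexp_neg_mul_Ioi (sub_pos.2 hβ) hr
  rw [sub_sub_cancel_left] at hΓ
  simp only [ofReal_mul, mul_assoc, integral_const_mul, hΓ]
  push_cast
  rw [neg_sub, cpow_sub _ _ hr0, cpow_one]
  field_simp

lemma tendsto_laplaceDefect_mul_rpow_of_re_pos [IsFiniteMeasure μ] (hμ : ∀ᵐ t ∂μ, 0 ≤ t)
    (hβ : β ∈ Ico (0 : ℝ) 1) (hT : Tendsto (fun y => μ.real (Ioi y) * y ^ β) atTop (𝓝 C))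
    (hr : 0 < r.re) :
    Tendsto (fun θ : ℝ => laplaceDefect μ (r * θ) * (θ ^ (-β) : ℝ)) (𝓝[>] 0)
      (𝓝 (C * Gamma (1 - β) * r ^ (β : ℂ))) := by
  have hmono : Antitone fun y => μ.real (Ioi y) :=
    fun _ _ h => measureReal_mono (Ioi_subset_Ioi h)
  have hlim := tendsto_integral_comp_div_mul_cexp hβ (fun _ => measureReal_nonneg)
    (fun y => measureReal_mono (subset_univ (Ioi y))) hmono.measurable hT hr
  rw [← mul_integral_rpow_neg_mul_cexp_Ioi C hβ.2 hr]
  refine (hlim.const_mul r).congr' ?_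
  filter_upwards [self_mem_nhdsWithin] with θ (hθ : 0 < θ)
  rw [laplaceDefect_mul_ofReal hμ hr hθ, mul_assoc, ← integral_mul_const]
  congr! 3
  rw [ofReal_mul, mul_right_comm]

theorem tendsto_laplaceDefect_mul_rpow [IsFiniteMeasure μ] (hμ : ∀ᵐ t ∂μ, 0 ≤ t)
    (hβ : β ∈ Ioo (0 : ℝ) 1) (hT : Tendsto (fun y => μ.real (Ioi y) * y ^ β) atTop (𝓝 C))
    (hr : 0 ≤ r.re) :
    Tendsto (fun θ : ℝ => laplaceDefect μ (r * θ) * (θ ^ (-β) : ℝ)) (𝓝[>] 0)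
      (𝓝 (C * Gamma (1 - β) * r ^ (β : ℂ))) := by
  let F (s : ℂ) (θ : ℝ) : ℂ := laplaceDefect μ (s * θ) * (θ ^ (-β) : ℝ)
  let L (s : ℂ) : ℂ := C * Gamma (1 - β) * s ^ (β : ℂ)
  have hF (s : ℂ) (hs : 0 < s.re) : Tendsto (F s) (𝓝[>] 0) (𝓝 (L s)) :=
    tendsto_laplaceDefect_mul_rpow_of_re_pos hμ (Ioo_subset_Ico_self hβ) hT hs
  have hdist (ε θ : ℝ) (hε : 0 < ε) (hθ : 0 < θ) :
      dist (F r θ) (L r) ≤ ‖F ε θ‖ + dist (F (r + ε) θ) (L r) := by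
    refine (dist_triangle _ (F (r + ε) θ) _).trans (add_le_add_left ?_ _)
    rw [dist_comm, dist_eq_norm, ← sub_mul, norm_mul, norm_mul, add_mul, ← ofReal_mul]
    gcongr
    exact norm_laplaceDefect_sub_le hμ (by simpa using mul_nonneg hr hθ.le) (mul_pos hε hθ).le
  have hLcont (z : ℂ) (hz : 0 ≤ z.re) : ContinuousAt L z :=
    (continuousAt_cpow_const_of_re_pos (Or.inl hz) (by simpa using hβ.1)).const_mul _
  have hLadd (z : ℂ) (hz : 0 ≤ z.re) : Tendsto (fun ε : ℝ => L (z + ε)) (𝓝[>] 0) (𝓝 (L z)) :=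
    (hLcont z hz).tendsto.comp
      (((by fun_prop : Continuous fun ε : ℝ => z + ε).tendsto' 0 z (by simp)).mono_left
        nhdsWithin_le_nhds)
  have hL : Tendsto (fun ε : ℝ => ‖L ε‖ + dist (L (r + ε)) (L r)) (𝓝[>] 0) (𝓝 0) := by
    have hL0 : L 0 = 0 := by simp [L, hβ.1.ne']
    simpa [hL0] using (hLadd 0 le_rfl).norm.add ((hLadd r hr).dist
      (tendsto_const_nhds (x := L r)))
  rw [Metric.tendsto_nhds]
  intro η hη
  obtain ⟨ε, hLε, hε : 0 < ε⟩ := ((hL.eventually_lt_const hη).and self_mem_nhdsWithin).exists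
  have hlim := (hF ε (by simpa using hε)).norm.add
    ((hF (r + ε) (by simpa using add_pos_of_nonneg_of_pos hr hε)).dist
      (tendsto_const_nhds (x := L r)))
  filter_upwards [hlim.eventually_lt_const hLε, self_mem_nhdsWithin] with θ hθη hθ
  exact (hdist ε θ hε hθ).trans_lt hθη

lemma ofReal_mul_Gamma_mul_neg_I_cpow_ne_zero (hC : C ≠ 0) (hβ : β < 1) :
    (C * Gamma (1 - β) * (-I) ^ (β : ℂ) : ℂ) ≠ 0 := by
  have hΓ : Gamma (1 - β) ≠ 0 := Gamma_ne_zero_of_re_pos (by simpa using hβ)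
  simp [hC, hΓ, cpow_eq_zero_iff]

theorem characteristic_function_stable_asymptotics_general [IsProbabilityMeasure μ]
    (hμ : ∀ᵐ t ∂μ, 0 ≤ t) (hC : C ≠ 0) (hβ : β ∈ Ioo (0 : ℝ) 1)
    (hT : (fun y => μ.real (Ioi y)) ~[atTop] fun y => C * y ^ (-β)) :
    (fun θ : ℝ => 1 - charFun μ θ) ~[𝓝[>] 0]
      fun θ => C * Gamma (1 - β) * (-I) ^ (β : ℂ) * (θ : ℂ) ^ (β : ℂ) := by
  have hlim := tendsto_laplaceDefect_mul_rpow (r := -I) hμ hβ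
    (tendsto_mul_rpow_of_isEquivalent hT) (by simp)
  have hequiv := ((isEquivalent_const_iff_tendsto
    (ofReal_mul_Gamma_mul_neg_I_cpow_ne_zero hC hβ.2)).2 hlim).mul
      (IsEquivalent.refl (u := fun θ : ℝ => (θ : ℂ) ^ (β : ℂ)))
  refine hequiv.congr_left ?_
  filter_upwards [self_mem_nhdsWithin] with θ (hθ : 0 < θ)
  rw [Pi.mul_apply, one_sub_charFun_eq_laplaceDefect, ← ofReal_cpow hθ.le, mul_assoc,
    ← ofReal_mul, ← Real.rpow_add hθ, neg_add_cancel, Real.rpow_zero, ofReal_one, mul_one]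

lemma charFun_map_natCast (p : PMF ℕ) (θ : ℝ) :
    charFun (p.toMeasure.map (Nat.cast : ℕ → ℝ)) θ =
      ∑' n, ((p n).toReal : ℂ) * cexp (n * θ * I) := by
  have hint : Integrable (fun n : ℕ => cexp (θ * (n : ℝ) * I)) p.toMeasure :=
    .of_bound (by fun_prop) 1 (ae_of_all _ fun n => by simp [norm_exp])
  rw [charFun_apply_real, integral_map (by fun_prop) (by fun_prop), p.integral_eq_tsum _ hint]
  congr! 2 with n
  rw [real_smul, mul_comm (θ : ℂ), ofReal_natCast]

lemma measureReal_map_natCast_Ioi (p : PMF ℕ) (hx : 0 ≤ x) :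
    (p.toMeasure.map (Nat.cast : ℕ → ℝ)).real (Ioi x) =
      ∑' n, if ⌊x⌋₊ < n then (p n).toReal else 0 := by
  have hpre : (Nat.cast : ℕ → ℝ) ⁻¹' Ioi x = Ioi ⌊x⌋₊ := by
    ext n
    simp [Nat.floor_lt hx]
  rw [map_measureReal_apply (by fun_prop) measurableSet_Ioi, hpre, measureReal_def,
    PMF.toMeasure_apply_eq_tsum, ENNReal.tsum_toReal_eq fun n =>
      ((indicator_le_self _ p n).trans_lt (p.apply_lt_top n)).ne]
  congr! with n
  by_cases hn : ⌊x⌋₊ < n <;> simp [indicator, hn]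

lemma exists_pmf_toReal_eq {f : ℕ → ℝ} (hf : ∀ n, 0 ≤ f n) (hsum : ∑' n, f n = 1) :
    ∃ p : PMF ℕ, ∀ n, (p n).toReal = f n := by
  have hsummable : Summable f := by
    by_contra h
    simp [tsum_eq_zero_of_not_summable h] at hsum
  refine ⟨⟨fun n => ENNReal.ofReal (f n), ?_⟩, fun n => ENNReal.toReal_ofReal (hf n)⟩
  rw [ENNReal.summable.hasSum_iff, ← ENNReal.ofReal_tsum_of_nonneg hf hsummable, hsum,
    ENNReal.ofReal_one]

theorem one_sub_tsum_mul_cexp_isEquivalent {f : ℕ → ℝ} (hf : ∀ n, 0 ≤ f n)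
    (hsum : ∑' n, f n = 1) (hC : C ≠ 0) (hβ : β ∈ Ioo (0 : ℝ) 1)
    (htail : (fun n => ∑' j, if n < j then f j else 0) ~[atTop] fun n => C * (n : ℝ) ^ (-β)) :
    (fun θ : ℝ => 1 - ∑' n, (f n : ℂ) * cexp (n * θ * I)) ~[𝓝[>] 0]
      fun θ => C * Gamma (1 - β) * (-I) ^ (β : ℂ) * (θ : ℂ) ^ (β : ℂ) := by
  obtain ⟨p, hp⟩ := exists_pmf_toReal_eq hf hsum
  let μ := p.toMeasure.map (Nat.cast : ℕ → ℝ)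
  have hprob : IsProbabilityMeasure μ := Measure.isProbabilityMeasure_map (by fun_prop)
  have hnonneg : ∀ᵐ t ∂μ, 0 ≤ t :=
    (ae_map_iff (by fun_prop) measurableSet_Ici).2 (.of_forall Nat.cast_nonneg)
  have hμtail : (fun y => μ.real (Ioi y)) ~[atTop] fun y => C * y ^ (-β) := by
    refine (isEquivalent_comp_natFloor htail).congr_left ?_
    filter_upwards [eventually_ge_atTop 0] with y hy
    simp only [μ, measureReal_map_natCast_Ioi p hy, hp]
  simpa only [μ, charFun_map_natCast, hp] using
    characteristic_function_stable_asymptotics_general hnonneg hC hβ hμtail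

end

/-- Abelian result for characteristic functions in the domain of a stable law of index
`β ∈ (0,1)`: there is a constant `C_β ≠ 0`, depending only on `C` and `β`, such that for
every probability distribution `(f_n)` on `{1,2,…}` with tail `∑_{j>n} f_j ~ C n^{-β}`,
`1 - ∑_{n≥1} f_n e^{inθ} = C_β θ^β (1 + o(1))` as `θ → 0⁺`. -/
theorem characteristic_function_stable_asymptotics
    (C β : ℝ) (hC : 0 < C) (hβ : β ∈ Set.Ioo (0 : ℝ) 1) :
    ∃ Cβ : ℂ, Cβ ≠ 0 ∧
      ∀ f : ℕ → ℝ, (∀ n, 0 ≤ f n) → f 0 = 0 → (∑' n, f n) = 1 →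
        ((fun n : ℕ => ∑' j : ℕ, if n < j then f j else 0) ~[atTop]
          fun n : ℕ => C * (n : ℝ) ^ (-β)) →
        ((fun θ : ℝ =>
            1 - ∑' n : ℕ, (f n : ℂ) * Complex.exp ((n : ℂ) * (θ : ℂ) * Complex.I))
          ~[nhdsWithin 0 (Set.Ioi 0)] fun θ : ℝ => Cβ * (θ : ℂ) ^ (β : ℂ)) := by
  exact ⟨_, ofReal_mul_Gamma_mul_neg_I_cpow_ne_zero hC.ne' hβ.2, fun f hf _ hsum htail =>
    one_sub_tsum_mul_cexp_isEquivalent hf hsum hC.ne' hβ htail⟩
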